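/- The inclusion problem for erasing pattern languages (without constraints) is undecidable: for every finite alphabet Σ with |Σ| ≥ 2 there is no algorithm that, given two patterns α and β over Σ ∪ ℕ, decides whether L_E(α) ⊆ L_E(β). Formally, the predicate 'L_E(α) ⊆ L_E(β)' on pairs of patterns (finite words over Σ ∪ ℕ) is not a computable predicate. -/

import Mathlib

/-- Patterns over `Σ ∪ X` with variable set `X = ℕ`. -/
abbrev Pattern (σ : Type) := List (σ ⊕ ℕ)

/-- Applying a substitution (determined by its action on variables, and fixing every
terminal) to a pattern; this is the restriction of the induced monoid morphism
`(Σ ∪ X)* → Σ*`. -/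
def applySub {σ : Type} (s : ℕ → List σ) : Pattern σ → List σ
  | [] => []
  | c :: p => Sum.elim (fun a => [a]) s c ++ applySub s p

/-- The erasing pattern language `L_E(p)` of a plain pattern. -/
def LangE {σ : Type} (p : Pattern σ) : Set (List σ) :=
  {w | ∃ s : ℕ → List σ, applySub s p = w}

/-!
Halting of a Turing machine is halting of a partial step function `ℕ × ℕ → ℕ × ℕ` whose graph is
semilinear: a configuration becomes a pair of numbers by reading the half tapes in base `p`. A
halting run is a list of numbers all of whose windows of length 4 lie outside a semilinear set `F`
of inconsistent windows, so the question is whether every list `P ++ X ++ Q` has a window in `F`.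

Write lists in unary over two letters `o`, `h`. The pattern `α` produces the frames of all pairs
`(W, Y)` with `W = h P x h Q` and `Y = y ^ 5`. The pattern `β` contains the frame of `(W, Y)`
exactly when `(W, Y)` is an instance of one of finitely many pairs of patterns: some of them detect
that `W` is no code or that `Y` is too short, and the others, one for each linear component
`v + A c` of `F`, detect the code of a vector of `F` in `W`, the parameters `c` being read off
from `Y` as a power of `o`. Hence the inclusion says that no `x` codes a halting run.
-/

namespace PatternInclusion

section Machine

open Turing

lemma primrec_two_pow : Primrec fun n : ℕ => 2 ^ n :=
  (Primrec₂.unpaired'.1 Nat.Primrec.pow).comp (Primrec.const 2) Primrec.id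

lemma primrec_log_two : Primrec (Nat.log 2) := by
  have hp : PrimrecRel fun m k : ℕ => 2 ^ k ≤ m :=
    Primrec.nat_le.comp (primrec_two_pow.comp Primrec.snd) Primrec.fst
  refine (Primrec.nat_findGreatest Primrec.id hp).of_eq fun m => ?_
  rcases Nat.eq_zero_or_pos m with rfl | hm
  · simp
  · refine Nat.findGreatest_eq_iff.2 ⟨Nat.log_le_self 2 m, fun _ => Nat.pow_log_le_self 2 hm.ne',
      fun k hk _ => (Nat.lt_pow_of_log_lt one_lt_two hk).not_ge⟩

-- Powers of two keep the initial tapes simple: the binary expansion of `2 ^ n` is a single `1` and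
-- `n` copies of `0`, whose tape is encoded by a number without any general base conversion.
theorem exists_partrec_two_pow_undecidable :
    ∃ f : ℕ →. ℕ, Nat.Partrec f ∧ ¬ ComputablePred fun n => (f (2 ^ n)).Dom := by
  refine ⟨fun m => (Denumerable.ofNat Nat.Partrec.Code (Nat.log 2 m)).eval 0,
    Partrec.nat_iff.1 (Nat.Partrec.Code.eval_part.comp
      ((Computable.ofNat _).comp primrec_log_two.to_comp) (Computable.const 0)),
    fun h => ComputablePred.halting_problem 0 ?_⟩
  refine ComputablePred.computable_of_manyOneReducible
    ⟨fun c => Encodable.encode c, Computable.encode, fun c => ?_⟩ h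
  simp [Nat.log_pow one_lt_two]

lemma trNat_two_mul {m : ℕ} (hm : m ≠ 0) :
    PartrecToTM2.trNat (2 * m) = PartrecToTM2.Γ'.bit0 :: PartrecToTM2.trNat m := by
  unfold PartrecToTM2.trNat
  rw [two_mul, Nat.cast_add, Num.bit0_of_bit0]
  rcases h : (m : Num) with _ | p
  · exact absurd (Nat.cast_eq_zero.1 (h : (m : Num) = 0)) hm
  · rfl

lemma trNat_two_pow (n : ℕ) : PartrecToTM2.trNat (2 ^ n) =
    List.replicate n PartrecToTM2.Γ'.bit0 ++ [PartrecToTM2.Γ'.bit1] := by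
  induction n with
  | zero => rfl
  | succ n ih =>
    rw [pow_succ', trNat_two_mul (by positivity), ih, List.replicate_succ, List.cons_append]

lemma tm0_eval_dom_iff (c : ToPartrec.Code) (v : List ℕ) :
    letI : Inhabited PartrecToTM2.Λ' := ⟨PartrecToTM2.trNormal c .halt⟩
    (TM0.eval (TM1to0.tr (TM2to1.tr PartrecToTM2.tr))
      (TM2to1.trInit PartrecToTM2.K'.main (PartrecToTM2.trList v))).Dom ↔ (c.eval v).Dom := by
  let _ : Inhabited PartrecToTM2.Λ' := ⟨PartrecToTM2.trNormal c .halt⟩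
  have init_eq : TM2.init PartrecToTM2.K'.main (PartrecToTM2.trList v) =
      PartrecToTM2.init c v := by
    simp only [TM2.init, PartrecToTM2.init, TM2.Cfg.mk.injEq]
    refine ⟨rfl, rfl, funext fun k => ?_⟩
    cases k <;> rfl
  calc _ ↔ (TM1.eval (TM2to1.tr PartrecToTM2.tr)
          (TM2to1.trInit PartrecToTM2.K'.main (PartrecToTM2.trList v))).Dom := by
        rw [TM1to0.tr_eval]
    _ ↔ (TM2.eval PartrecToTM2.tr PartrecToTM2.K'.main (PartrecToTM2.trList v)).Dom :=
        TM2to1.tr_eval_dom _ _ _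
    _ ↔ (StateTransition.eval (TM2.step PartrecToTM2.tr) (PartrecToTM2.init c v)).Dom := by
        rw [← init_eq]; rfl
    _ ↔ (c.eval v).Dom := by rw [PartrecToTM2.tr_eval]; rfl

theorem exists_TM0_undecidable : ∃ (Γ Λ : Type) (_ : Inhabited Γ) (_ : Inhabited Λ)
    (_ : Fintype Γ) (M : TM0.Machine Γ Λ) (S : Finset Λ) (a b c : Γ), TM0.Supports M (S : Set Λ) ∧
      ¬ ComputablePred fun n => (TM0.eval M (a :: b :: List.replicate n c)).Dom := by
  obtain ⟨f, hf, hf_undec⟩ := exists_partrec_two_pow_undecidable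
  obtain ⟨c, hc⟩ := ToPartrec.Code.exists_code (Nat.Partrec'.part_iff₁.2 (Partrec.nat_iff.2 hf))
  let _ : Inhabited PartrecToTM2.Λ' := ⟨PartrecToTM2.trNormal c .halt⟩
  have hS := TM1to0.tr_supports _ (TM2to1.tr_supports _ (PartrecToTM2.tr_supports c .halt))
  have : Fintype PartrecToTM2.K' :=
    ⟨{.main, .rev, .aux, .stack}, fun k => by cases k <;> simp⟩
  let cell (bottom : Bool) (a : PartrecToTM2.Γ') :
      TM2to1.Γ' PartrecToTM2.K' fun _ => PartrecToTM2.Γ' :=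
    (bottom, Function.update (fun _ => none) PartrecToTM2.K'.main (some a))
  have tape_eq (n : ℕ) : TM2to1.trInit PartrecToTM2.K'.main (PartrecToTM2.trList [2 ^ n]) =
      cell true .cons :: cell false .bit1 :: List.replicate n (cell false .bit0) := by
    have reverse_eq : (PartrecToTM2.trList [2 ^ n]).reverse =
        .cons :: .bit1 :: List.replicate n .bit0 := by
      simp [PartrecToTM2.trList, trNat_two_pow]
    rw [TM2to1.trInit, reverse_eq]
    exact congrArg (cell true .cons :: cell false .bit1 :: ·) List.map_replicate
  refine ⟨_, _, inferInstance, inferInstance, inferInstance, _, _, cell true .cons,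
    cell false .bit1, cell false .bit0, hS, fun h => hf_undec (h.of_eq fun n => ?_)⟩
  rw [← tape_eq]
  refine (tm0_eval_dom_iff c [2 ^ n]).trans ?_
  have code_eq : c.eval [2 ^ n] = pure <$> f (2 ^ n) := hc (2 ^ n ::ᵥ List.Vector.nil)
  exact (congrArg Part.Dom code_eq).to_iff

lemma exists_equiv_fin_map_default (α : Type*) [Inhabited α] [Finite α] :
    ∃ (n : ℕ) (_ : NeZero n) (e : α ≃ Fin n), e default = default := by
  obtain ⟨n, ⟨e⟩⟩ := Finite.exists_equiv_fin α
  have : NeZero n := ⟨fun h => (h ▸ e default).elim0⟩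
  exact ⟨n, this, e.trans (Equiv.swap (e default) default), Equiv.swap_apply_left _ _⟩

theorem exists_fin_TM0_undecidable : ∃ (p N : ℕ) (_ : NeZero p) (_ : NeZero N)
    (M : TM0.Machine (Fin p) (Fin N)) (a b c : Fin p),
      ¬ ComputablePred fun n => (TM0.eval M (a :: b :: List.replicate n c)).Dom := by
  classical
  obtain ⟨Γ, Λ, _, _, _, M, S, a, b, c, hS, hM⟩ := exists_TM0_undecidable
  let _ : Inhabited S := ⟨⟨default, hS.1⟩⟩
  obtain ⟨p, _, e, he⟩ := exists_equiv_fin_map_default Γ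
  obtain ⟨N, _, i, hi⟩ := exists_equiv_fin_map_default S
  let symbol : PointedMap Γ (Fin p) := ⟨e, he⟩
  let symbol' : PointedMap (Fin p) Γ := ⟨e.symm, by rw [← he, e.symm_apply_apply]⟩
  let label : PointedMap Λ (Fin N) :=
    ⟨fun q => if h : q ∈ S then i ⟨q, h⟩ else default, (dif_pos hS.1).trans hi⟩
  have respects := TM0.Machine.map_respects M symbol symbol' label (fun j => (i.symm j : Λ)) hS
    e.symm_apply_apply fun q hq => by
      change (i.symm (dite _ _ _) : Λ) = q
      rw [dif_pos (Finset.mem_coe.1 hq), i.symm_apply_apply]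
  refine ⟨p, N, ‹_›, ‹_›, M.map symbol symbol' label fun j => i.symm j, e a, e b, e c,
    fun h => hM (h.of_eq fun n => ?_)⟩
  have init_map := TM0.map_init symbol label (a :: b :: List.replicate n c)
  have eval_dom := StateTransition.tr_eval_dom respects ⟨hS.1, init_map⟩
  simp only [List.map_cons, List.map_replicate] at eval_dom
  exact eval_dom

/-- The half tape `L` is the base-`p` expansion of `n`, least significant digit first. -/
def Represents {p : ℕ} [NeZero p] (L : ListBlank (Fin p)) (n : ℕ) : Prop :=
  ∀ i, (L.nth i : ℕ) = n / p ^ i % p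

namespace Represents

variable {p : ℕ} [NeZero p] {L : ListBlank (Fin p)} {n : ℕ}

lemma head_eq (h : Represents L n) : (L.head : ℕ) = n % p := by
  simpa using h 0

lemma ofNat_eq_head (h : Represents L n) : Fin.ofNat p n = L.head :=
  Fin.ext h.head_eq.symm

lemma tail (h : Represents L n) : Represents L.tail (n / p) := fun i => by
  rw [← ListBlank.nth_succ, h (i + 1), Nat.div_div_eq_div_mul, pow_succ']

lemma cons (h : Represents L n) (a : Fin p) : Represents (L.cons a) (a + p * n)
  | 0 => by simp [Nat.mod_eq_of_lt a.2]
  | i + 1 => by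
    rw [ListBlank.nth_succ, ListBlank.tail_cons, h i, pow_succ', ← Nat.div_div_eq_div_mul,
      Nat.add_mul_div_left _ _ (NeZero.pos p), Nat.div_eq_of_lt a.2, zero_add]

lemma nil : Represents (ListBlank.mk ([] : List (Fin p))) 0 := fun i => by
  simp [ListBlank.nth_mk]

lemma replicate (a : Fin p) (k : ℕ) :
    Represents (ListBlank.mk (List.replicate k a)) ((fun m => a + p * m)^[k] 0) := by
  induction k with
  | zero => exact nil
  | succ k ih =>
    rw [List.replicate_succ, ← ListBlank.cons_mk, Function.iterate_succ_apply']
    exact ih.cons a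

end Represents

section NumStep

variable {p N : ℕ} [NeZero p] [NeZero N] (M : TM0.Machine (Fin p) (Fin N))

/-- The step of `M` on pairs of natural numbers: the configuration with state `q` and tape
`mk' L R` is stored as `(q + N * l, r)`, where `l` and `r` represent `L` and `R`. -/
def numStep (c : ℕ × ℕ) : Option (ℕ × ℕ) :=
  (M (Fin.ofNat N c.1) (Fin.ofNat p c.2)).map fun
    | (q, .move .left) => (q + N * (c.1 / N / p), c.1 / N % p + p * c.2)
    | (q, .move .right) => (q + N * (c.2 % p + p * (c.1 / N)), c.2 / p)
    | (q, .write a) => (q + N * (c.1 / N), a + p * (c.2 / p))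

/-- The simulation relation between Turing machine configurations and pairs of numbers. -/
def Encodes (c : TM0.Cfg (Fin p) (Fin N)) (x : ℕ × ℕ) : Prop :=
  ∃ L R l, c.Tape = Tape.mk' L R ∧ Represents L l ∧ Represents R x.2 ∧ x.1 = c.q + N * l

lemma numStep_respects : StateTransition.Respects (TM0.step M) (numStep M) Encodes := by
  rintro ⟨q, _⟩ ⟨_, r⟩ ⟨L, R, l, rfl, hL, hR, rfl⟩
  have state_eq : Fin.ofNat N (q + N * l) = q :=
    Fin.ext (by simp [Nat.mod_eq_of_lt q.2])
  have left_eq : (q + N * l) / N = l := by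
    rw [Nat.add_mul_div_left _ _ (NeZero.pos N), Nat.div_eq_of_lt q.2, zero_add]
  have head_eq : Fin.ofNat p r = R.head := hR.ofNat_eq_head
  simp only [TM0.step, Tape.mk'_head]
  rcases h : M q R.head with _ | ⟨q', (_ | _) | a⟩
  · simp only [numStep, state_eq, head_eq, h, Option.map_none]
  · refine ⟨(q' + N * (l / p), l % p + p * r), ⟨_, _, _, Tape.move_left_mk' L R, hL.tail, ?_, rfl⟩,
      .single (by simp only [numStep, state_eq, left_eq, head_eq, h]; rfl)⟩
    simpa only [hL.head_eq] using hR.cons L.head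
  · refine ⟨(q' + N * (r % p + p * l), r / p), ⟨_, _, _, Tape.move_right_mk' L R, ?_, hR.tail, rfl⟩,
      .single (by simp only [numStep, state_eq, left_eq, head_eq, h]; rfl)⟩
    simpa only [hR.head_eq] using hL.cons R.head
  · exact ⟨(q' + N * l, a + p * (r / p)), ⟨_, _, _, Tape.write_mk' a L R, hL, hR.tail.cons a, rfl⟩,
      .single (by simp only [numStep, state_eq, left_eq, head_eq, h]; rfl)⟩

lemma numStep_affine (i : Fin N) (a b : Fin p) (l r : ℕ) :
    numStep M (i + N * (b + p * l), a + p * r) = (M i a).map fun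
      | (q, .move .left) => (q + N * l, b + p * (a + p * r))
      | (q, .move .right) => (q + N * (a + p * (b + p * l)), r)
      | (q, .write c) => (q + N * (b + p * l), c + p * r) := by
  have hN := NeZero.pos N
  have hp := NeZero.pos p
  have hi : Fin.ofNat N (i + N * (b + p * l)) = i := Fin.ext (by simp [Nat.mod_eq_of_lt i.2])
  have ha : Fin.ofNat p (a + p * r) = a := Fin.ext (by simp [Nat.mod_eq_of_lt a.2])
  simp only [numStep, hi, ha, Nat.add_mul_div_left _ _ hN, Nat.add_mul_div_left _ _ hp,
    Nat.div_eq_of_lt i.2, Nat.div_eq_of_lt a.2, Nat.div_eq_of_lt b.2, Nat.add_mul_mod_self_left,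
    Nat.mod_eq_of_lt a.2, Nat.mod_eq_of_lt b.2, zero_add]

lemma isSemilinearSet_of_affine₂ {ι : Type*} {P : (ι → ℕ) → ℕ → ℕ → Prop} (u a b : ι → ℕ)
    (h : ∀ w l r, P w l r ↔ ∀ i, w i = u i + l * a i + r * b i) :
    IsSemilinearSet {w | ∃ l r, P w l r} := by
  refine IsLinearSet.isSemilinearSet ⟨u, {a, b}, Set.toFinite _, Set.ext fun w => ?_⟩
  have affine_iff (w : ι → ℕ) (l r : ℕ) : P w l r ↔ w = u + (l • a + r • b) := by
    simp only [h, funext_iff, Pi.add_apply, Pi.smul_apply, smul_eq_mul, add_assoc]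
  simp only [affine_iff, Set.mem_ofPred_eq, Set.mem_vadd_set, SetLike.mem_coe,
    AddSubmonoid.mem_closure_pair, vadd_eq_add]
  constructor
  · rintro ⟨l, r, rfl⟩
    exact ⟨_, ⟨l, r, rfl⟩, rfl⟩
  · rintro ⟨_, ⟨l, r, rfl⟩, rfl⟩
    exact ⟨l, r, rfl⟩

lemma isSemilinearSet_numStep :
    IsSemilinearSet {v : Fin 4 → ℕ | numStep M (v 0, v 1) = some (v 2, v 3)} := by
  have decompose : {v : Fin 4 → ℕ | numStep M (v 0, v 1) = some (v 2, v 3)} =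
      ⋃ (i : Fin N) (b : Fin p) (a : Fin p), {v | ∃ l r, v 0 = i + N * (b + p * l) ∧
        v 1 = a + p * r ∧ numStep M (i + N * (b + p * l), a + p * r) = some (v 2, v 3)} := by
    ext v
    simp only [Set.mem_ofPred_eq, Set.mem_iUnion]
    constructor
    · intro hv
      have h0 : v 0 = v 0 % N + N * (v 0 / N % p + p * (v 0 / N / p)) := by
        rw [Nat.mod_add_div, Nat.mod_add_div]
      have h1 : v 1 = v 1 % p + p * (v 1 / p) := (Nat.mod_add_div _ _).symm
      exact ⟨Fin.ofNat N (v 0), Fin.ofNat p (v 0 / N), Fin.ofNat p (v 1), _, _, h0, h1,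
        by simpa only [Fin.ofNat, ← h0, ← h1] using hv⟩
    · rintro ⟨i, b, a, l, r, h0, h1, hv⟩
      rwa [h0, h1]
  rw [decompose]
  refine .iUnion fun i => .iUnion fun b => .iUnion fun a => ?_
  simp only [numStep_affine]
  rcases M i a with _ | ⟨q, (_ | _) | c⟩
  · simp [IsSemilinearSet.empty]
  on_goal 1 =>
    refine isSemilinearSet_of_affine₂ ![i + N * b, a, q, b + p * a]
      ![N * p, 0, N, 0] ![0, p, 0, p * p] fun v l r => ?_
  on_goal 2 =>
    refine isSemilinearSet_of_affine₂ ![i + N * b, a, q + N * (a + p * b), 0]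
      ![N * p, 0, N * (p * p), 0] ![0, p, 0, 1] fun v l r => ?_
  on_goal 3 =>
    refine isSemilinearSet_of_affine₂ ![i + N * b, a, q + N * b, c] ![N * p, 0, N * p, 0]
      ![0, p, 0, p] fun v l r => ?_
  all_goals
    simp only [Option.map_some, Option.some.injEq, Prod.mk.injEq, Fin.forall_fin_succ,
      Matrix.cons_val_zero, Matrix.cons_val_succ, IsEmpty.forall_iff]
    grind

end NumStep

theorem exists_semilinear_step_undecidable :
    ∃ (st : ℕ × ℕ → Option (ℕ × ℕ)) (A : ℕ) (B : ℕ → ℕ),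
      IsSemilinearSet {v : Fin 4 → ℕ | st (v 0, v 1) = some (v 2, v 3)} ∧ Primrec B ∧
      ¬ ComputablePred fun n => (StateTransition.eval st (A, B n)).Dom := by
  obtain ⟨p, N, _, _, M, a, b, c, undecidable⟩ := exists_fin_TM0_undecidable
  let digits (n : ℕ) : ℕ := (fun m => c + p * m)^[n] 0
  refine ⟨numStep M, 0, fun n => a + p * (b + p * digits n), isSemilinearSet_numStep M, ?_,
    fun h => undecidable (h.of_eq fun n => ?_)⟩
  · have digit (d : ℕ) : Primrec fun m => d + p * m :=
      Primrec.nat_add.comp (.const d) (Primrec.nat_mul.comp (.const p) .id)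
    exact (digit a).comp ((digit b).comp (.nat_iterate .id (.const 0) ((digit c).comp .snd)))
  · have encodes : Encodes (TM0.init (a :: b :: List.replicate n c) : TM0.Cfg (Fin p) (Fin N))
        (0, a + p * (b + p * digits n)) :=
      ⟨_, _, 0, rfl, .nil, ((Represents.replicate c n).cons b).cons a, by simp [TM0.init]⟩
    exact StateTransition.tr_eval_dom (numStep_respects M) encodes

end Machine

section History

open scoped Pointwise

/-- The condition on four consecutive entries of a history, where a history of a run of `st` lists
the pairs `(x, y)` it visits as `2 * x + 1, 2 * y`. -/
def Consistent (st : ℕ × ℕ → Option (ℕ × ℕ)) (w : Fin 4 → ℕ) : Prop :=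
  ∀ x, w 0 = 2 * x + 1 → ∃ y, w 1 = 2 * y ∧
    ∀ c, st (x, y) = some c → w 2 = 2 * c.1 + 1 ∧ w 3 = 2 * c.2

variable {st : ℕ × ℕ → Option (ℕ × ℕ)}

lemma isSemilinearSet_eq_none
    (graph : IsSemilinearSet {v : Fin 4 → ℕ | st (v 0, v 1) = some (v 2, v 3)}) :
    IsSemilinearSet {v : Fin 4 → ℕ | st (v 0, v 1) = none} := by
  let π : (Fin 4 → ℕ) →ₗ[ℕ] (Fin 2 → ℕ) := LinearMap.funLeft ℕ ℕ ![0, 1]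
  let moving := {v : Fin 4 → ℕ | st (v 0, v 1) = some (v 2, v 3)}
  have moving_iff (v : Fin 4 → ℕ) : v ∈ π ⁻¹' (π '' moving) ↔ ∃ c, st (v 0, v 1) = some c := by
    constructor
    · rintro ⟨u, hu, hπ⟩
      have h0 : u 0 = v 0 := congrFun hπ 0
      have h1 : u 1 = v 1 := congrFun hπ 1
      exact ⟨_, by rw [← h0, ← h1]; exact hu⟩
    · rintro ⟨c, hc⟩
      refine ⟨![v 0, v 1, c.1, c.2], hc, funext fun i => ?_⟩
      fin_cases i <;> rfl
  convert! ((graph.image π).preimage π).compl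
  ext v
  rw [Set.mem_compl_iff, moving_iff, ← Option.ne_none_iff_exists', not_not]
  rfl

lemma isSemilinearSet_consistent
    (graph : IsSemilinearSet {v : Fin 4 → ℕ | st (v 0, v 1) = some (v 2, v 3)}) :
    IsSemilinearSet {w | Consistent st w} := by
  let scale (a : Fin 4 → ℕ) : (Fin 4 → ℕ) →+ (Fin 4 → ℕ) := AddMonoidHom.mulLeft a
  let moving := {v : Fin 4 → ℕ | st (v 0, v 1) = some (v 2, v 3)}
  let halting := {v : Fin 4 → ℕ | st (v 0, v 1) = none}
  have decompose : {w | Consistent st w} = Set.range (scale ![2, 1, 1, 1]) ∪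
      (![1, 0, 0, 0] +ᵥ scale ![2, 2, 1, 1] '' halting) ∪
      (![1, 0, 1, 0] +ᵥ scale ![2, 2, 2, 2] '' moving) := by
    ext w
    constructor
    · intro hw
      rcases Nat.even_or_odd' (w 0) with ⟨x, hx | hx⟩
      · refine .inl (.inl ⟨![x, w 1, w 2, w 3], ?_⟩)
        ext i; fin_cases i <;> simp [scale, hx]
      obtain ⟨y, hy, hw⟩ := hw x hx
      rcases hxy : st (x, y) with _ | c
      · refine .inl (.inr ⟨_, ⟨![x, y, w 2, w 3], hxy, rfl⟩, ?_⟩)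
        ext i; fin_cases i <;> simp [scale, hx, hy, add_comm]
      · obtain ⟨h2, h3⟩ := hw c hxy
        refine .inr ⟨_, ⟨![x, y, c.1, c.2], hxy, rfl⟩, ?_⟩
        ext i; fin_cases i <;> simp [scale, hx, hy, h2, h3, add_comm]
    · rintro ((⟨v, rfl⟩ | ⟨_, ⟨v, hv, rfl⟩, rfl⟩) | ⟨_, ⟨v, hv, rfl⟩, rfl⟩) x hx
      · replace hx : 2 * v 0 = 2 * x + 1 := hx
        omega
      all_goals
        replace hx : 1 + 2 * v 0 = 2 * x + 1 := hx
        obtain rfl : v 0 = x := by omega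
        refine ⟨v 1, by simp [scale], fun c hc => ?_⟩
        cases (Eq.symm hv).trans hc
      simp [scale, add_comm]
  rw [decompose, ← Set.image_univ]
  have semilinear_halting := isSemilinearSet_eq_none graph
  exact ((IsSemilinearSet.univ.image _).union ((semilinear_halting.image _).vadd _)).union
    ((graph.image _).vadd _)

lemma forall_window_iff (c : ℕ × ℕ) (s t : ℕ) (l : List ℕ) :
    (∀ w, List.ofFn w <:+: (2 * c.1 + 1) :: (2 * c.2) :: s :: t :: l → Consistent st w) ↔
      (∀ c', st c = some c' → s = 2 * c'.1 + 1 ∧ t = 2 * c'.2) ∧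
        ∀ w, List.ofFn w <:+: s :: t :: l → Consistent st w := by
  constructor
  · refine fun h => ⟨fun c' hc => ?_, fun w hw => h w (List.infix_cons (List.infix_cons hw))⟩
    obtain ⟨y, hy, hst⟩ := h ![2 * c.1 + 1, 2 * c.2, s, t] ⟨[], l, rfl⟩ c.1 rfl
    obtain rfl : y = c.2 := by simpa using hy.symm
    exact hst c' hc
  · rintro ⟨first, rest⟩ w hw x hx
    rcases List.infix_cons_iff.1 hw with hw | hw
    · simp only [List.ofFn_succ, List.cons_prefix_cons] at hw
      obtain ⟨h0, h1, h2, h3, -⟩ := hw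
      obtain rfl : x = c.1 := by omega
      exact ⟨c.2, h1, fun c' hc => ⟨h2.trans (first c' hc).1, h3.trans (first c' hc).2⟩⟩
    rcases List.infix_cons_iff.1 hw with hw | hw
    · simp only [List.ofFn_succ, List.cons_prefix_cons] at hw
      omega
    · exact rest w hw x hx

lemma eval_dom_of_eq_none {c : ℕ × ℕ} (h : st c = none) : (StateTransition.eval st c).Dom :=
  Part.dom_iff_mem.2 ⟨c, StateTransition.mem_eval.2 ⟨.refl, h⟩⟩

lemma exists_history {c d : ℕ × ℕ} (h : d ∈ StateTransition.eval st c) : ∃ X : List ℕ, X ≠ [] ∧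
    ∀ w, List.ofFn w <:+: [2 * c.1 + 1, 2 * c.2] ++ X ++ [1, 1] → Consistent st w := by
  refine StateTransition.evalInduction h fun c _ ih => ?_
  rcases hc : st c with _ | c'
  · refine ⟨[0], List.cons_ne_nil _ _, (forall_window_iff c 0 1 [1]).2 ⟨?_, fun w hw => ?_⟩⟩
    · simp [hc]
    · simpa using hw.length_le
  · obtain ⟨X, -, hX⟩ := ih c' hc
    have windows := (forall_window_iff c (2 * c'.1 + 1) (2 * c'.2) (X ++ [1, 1])).2
      ⟨fun d hd => by cases hc.symm.trans hd; exact ⟨rfl, rfl⟩, by simpa using hX⟩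
    exact ⟨(2 * c'.1 + 1) :: (2 * c'.2) :: X, List.cons_ne_nil _ _, by simpa using windows⟩

lemma eval_dom_of_history (X : List ℕ) : ∀ c : ℕ × ℕ,
    (∀ w, List.ofFn w <:+: [2 * c.1 + 1, 2 * c.2] ++ X ++ [1, 1] → Consistent st w) →
      (StateTransition.eval st c).Dom := by
  -- The end marker is odd where a successor would need an even entry, so there is none.
  have dom_of_one {c : ℕ × ℕ} {s : ℕ}
      (h : ∀ c', st c = some c' → s = 2 * c'.1 + 1 ∧ 1 = 2 * c'.2) :
      (StateTransition.eval st c).Dom :=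
    eval_dom_of_eq_none (Option.eq_none_iff_forall_ne_some.2 fun c' hc => by grind)
  induction X using List.twoStepInduction with
  | nil => exact fun c h => dom_of_one ((forall_window_iff c 1 1 []).1 h).1
  | singleton s => exact fun c h => dom_of_one ((forall_window_iff c s 1 [1]).1 h).1
  | cons_cons s t X ih =>
    intro c h
    obtain ⟨first, rest⟩ := (forall_window_iff c s t (X ++ [1, 1])).1 (by simpa using h)
    rcases hc : st c with _ | c'
    · exact eval_dom_of_eq_none hc
    · obtain ⟨rfl, rfl⟩ := first c' hc
      rw [StateTransition.reaches_eval (.single hc)]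
      exact ih c' (by simpa using rest)

theorem eval_dom_iff_exists_history (c : ℕ × ℕ) : (StateTransition.eval st c).Dom ↔
    ∃ X : List ℕ, X ≠ [] ∧
      ∀ w, List.ofFn w <:+: [2 * c.1 + 1, 2 * c.2] ++ X ++ [1, 1] → Consistent st w :=
  ⟨fun h => exists_history (Part.get_mem h), fun ⟨X, _, hX⟩ => eval_dom_of_history X c hX⟩

end History

section Words

variable {σ : Type*} {o h : σ} {m A B a b u r : List σ}

lemma append_append_eq_append_cons (ho : o ∉ m) (eq : A ++ m ++ B = a ++ o :: b) :
    (∃ B', A ++ m ++ B' = a ∧ B = B' ++ o :: b) ∨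
      ∃ A', A = a ++ o :: A' ∧ A' ++ m ++ B = b := by
  rcases List.append_eq_append_iff.1 eq with ⟨B', rfl, rfl⟩ | ⟨_ | ⟨_, c⟩, hc, hb⟩
  · exact .inl ⟨B', rfl, rfl⟩
  · exact .inl ⟨[], by simpa using hc, hb.symm⟩
  obtain ⟨rfl, rfl⟩ := List.cons.inj hb
  rcases List.append_eq_append_iff.1 hc with ⟨d, -, rfl⟩ | ⟨_ | ⟨_, A'⟩, hA, hd⟩
  · simp at ho
  · simp [← show o :: c = m from hd] at ho
  · obtain ⟨rfl, rfl⟩ := List.cons.inj hd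
    exact .inr ⟨A', hA, rfl⟩

lemma infix_append_cons_iff (ho : o ∉ m) : m <:+: a ++ o :: b ↔ m <:+: a ∨ m <:+: b := by
  constructor
  · rintro ⟨A, B, eq⟩
    rcases append_append_eq_append_cons ho eq with ⟨B', hB', -⟩ | ⟨A', -, hA'⟩
    · exact .inl ⟨A, B', hB'⟩
    · exact .inr ⟨A', B, hA'⟩
  · rintro (hm | hm)
    · exact hm.trans (List.infix_append' [] _ _)
    · exact hm.trans ⟨a ++ [o], [], by simp⟩

lemma occurrence_eq_or_later (ho : o ∉ m) (hu : ¬ m <:+: u)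
    (eq : A ++ m ++ B = u ++ [o] ++ m ++ o :: r) :
    (A = u ++ [o] ∧ B = o :: r) ∨ ∃ A', A' ++ m ++ B = r := by
  have eq' : A ++ m ++ B = u ++ o :: (m ++ o :: r) := by simpa using eq
  rcases append_append_eq_append_cons ho eq' with ⟨B', hB', -⟩ | ⟨A', rfl, hA'⟩
  · exact absurd ⟨A, B', hB'⟩ hu
  rcases append_append_eq_append_cons ho hA' with ⟨B', hB', rfl⟩ | ⟨A'', -, hA''⟩
  · have lengths := congrArg List.length hB'
    simp only [List.length_append] at lengths
    obtain rfl : A' = [] := List.length_eq_zero_iff.1 (by omega)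
    obtain rfl : B' = [] := List.length_eq_zero_iff.1 (by omega)
    exact .inl ⟨rfl, rfl⟩
  · exact .inr ⟨A'', hA''⟩

end Words

section Unary

variable {σ : Type*} {o h : σ}

/-- The unary code of a list of numbers: an entry `k` is written as the block `o ^ (k + 1) h`. -/
def unary (o h : σ) (X : List ℕ) : List σ :=
  X.flatMap fun k => List.replicate (k + 1) o ++ [h]

@[simp] lemma unary_nil : unary o h [] = [] := rfl

@[simp] lemma unary_cons (k : ℕ) (X : List ℕ) :
    unary o h (k :: X) = List.replicate (k + 1) o ++ h :: unary o h X := by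
  simp [unary]

@[simp] lemma unary_append (X Y : List ℕ) : unary o h (X ++ Y) = unary o h X ++ unary o h Y :=
  List.flatMap_append

lemma mem_unary {X : List ℕ} {a : σ} (ha : a ∈ unary o h X) : a = o ∨ a = h := by
  simp only [unary, List.mem_flatMap, List.mem_append, List.mem_replicate, List.mem_singleton]
    at ha
  grind

lemma exists_cons_unary_eq_concat (X : List ℕ) : ∃ V, h :: unary o h X = V ++ [h] := by
  induction X using List.reverseRecOn with
  | nil => exact ⟨[], rfl⟩
  | append_singleton X k _ => exact ⟨h :: unary o h X ++ List.replicate (k + 1) o, by simp⟩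

lemma hh_not_infix_cons_unary (hoh : o ≠ h) (X : List ℕ) : ¬ [h, h] <:+: h :: unary o h X := by
  induction X with
  | nil => exact fun hh => by simpa using hh.length_le
  | cons k X ih =>
    have split : h :: unary o h (k :: X) = (h :: List.replicate k o) ++ o :: h :: unary o h X := by
      simp [List.replicate_succ']
    rw [split, infix_append_cons_iff (by simpa using hoh)]
    refine not_or.2 ⟨fun hh => ?_, ih⟩
    classical
    have count_le := hh.sublist.count_le h
    simp [List.count_replicate, hoh] at count_le

lemma exists_unary_append_replicate (z : List σ) (letters : ∀ a ∈ z, a = o ∨ a = h)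
    (hh : ¬ [h, h] <:+: h :: z) : ∃ X j, z = unary o h X ++ List.replicate j o := by
  induction z using List.reverseRecOn with
  | nil => exact ⟨[], 0, rfl⟩
  | append_singleton z a ih =>
    obtain ⟨X, j, rfl⟩ := ih (fun a ha => letters a (by simp [ha]))
      fun h' => hh (h'.trans ⟨[], [a], by simp⟩)
    rcases letters a (by simp) with rfl | rfl
    · exact ⟨X, j + 1, by simp [List.replicate_succ']⟩
    · rcases j with _ | j
      · obtain ⟨V, hV⟩ := exists_cons_unary_eq_concat (o := o) (h := a) X
        exact absurd ⟨V, [], by simpa using congrArg (· ++ [a]) hV.symm⟩ hh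
      · exact ⟨X ++ [j], 0, by simp⟩

lemma exists_unary_eq_concat (hoh : o ≠ h) {z : List σ} (letters : ∀ a ∈ z, a = o ∨ a = h)
    (hh : ¬ [h, h] <:+: h :: (z ++ [h])) : ∃ X ≠ [], unary o h X = z ++ [h] := by
  obtain ⟨X, j, hX⟩ := exists_unary_append_replicate (o := o) (z ++ [h]) (by grind) hh
  rcases j with _ | j
  · exact ⟨X, by rintro rfl; simp at hX, by simpa using hX.symm⟩
  · rw [List.replicate_succ', ← List.append_assoc] at hX
    exact absurd (List.append_inj' hX rfl).2 (by simpa using hoh.symm)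

lemma replicate_append_cons_inj (hoh : o ≠ h) {k l : ℕ} {x y : List σ}
    (eq : List.replicate k o ++ h :: x = List.replicate l o ++ h :: y) : k = l ∧ x = y := by
  induction k generalizing l with
  | zero => rcases l with _ | l <;> simp_all [List.replicate_succ, eq_comm]
  | succ k ih =>
    rcases l with _ | l
    · simp_all [List.replicate_succ]
    · obtain ⟨rfl, hxy⟩ := ih (List.cons.inj eq).2
      exact ⟨rfl, hxy⟩

lemma unary_prefix_iff (hoh : o ≠ h) (X Y : List ℕ) :
    unary o h X <+: unary o h Y ↔ X <+: Y := by
  refine ⟨fun hXY => ?_, fun ⟨Z, hZ⟩ => ⟨unary o h Z, by rw [← hZ, unary_append]⟩⟩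
  induction X generalizing Y with
  | nil => exact List.nil_prefix
  | cons k X ih =>
    obtain ⟨z, hz⟩ := hXY
    rcases Y with _ | ⟨l, Y⟩
    · simp at hz
    simp only [unary_cons, List.append_assoc, List.cons_append] at hz
    obtain ⟨hkl, hXY⟩ := replicate_append_cons_inj hoh hz
    exact List.cons_prefix_cons.2 ⟨Nat.succ.inj hkl, ih Y ⟨z, hXY⟩⟩

lemma cons_unary_infix_iff (hoh : o ≠ h) (X Y : List ℕ) :
    h :: unary o h X <:+: h :: unary o h Y ↔ X <:+: Y := by
  constructor
  · intro hXY
    induction Y with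
    | nil =>
      rcases X with _ | ⟨k, X⟩
      · exact List.infix_rfl
      · simpa using hXY.length_le
    | cons k Y ih =>
      rcases List.infix_cons_iff.1 hXY with hXY | hXY
      · exact ((unary_prefix_iff hoh _ _).1 (List.cons_prefix_cons.1 hXY).2).isInfix
      · refine List.infix_cons (ih ?_)
        rw [unary_cons] at hXY
        generalize k + 1 = j at hXY
        induction j with
        | zero => exact hXY
        | succ j ihj =>
          rcases List.infix_cons_iff.1 hXY with hXY | hXY
          · exact absurd (List.cons_prefix_cons.1 hXY).1 hoh.symm
          · exact ihj hXY
  · rintro ⟨V, W, rfl⟩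
    obtain ⟨V', hV'⟩ := exists_cons_unary_eq_concat (o := o) (h := h) V
    exact ⟨V', unary o h W, by
      rw [unary_append, unary_append, ← List.cons_append, ← List.cons_append, hV']; simp⟩

end Unary

section Gadget

variable {σ : Type*} {o h : σ}

/-- The word `v s₁ v s₂ v ⋯ v`, which presents the list `S` of words with separators `v`. -/
def weave (v : List σ) (S : List (List σ)) : List σ :=
  v ++ S.flatMap (· ++ v)

/-- The separator `o h h o`. It cannot be mistaken inside a weave of words avoiding `h h`. -/
def separator (o h : σ) : List σ := [o, h, h, o]

/-- The word encoding a tuple `S` for the gadget pattern. Its only factor `h h h` marks off the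
square of the separator in front of the weave of `S`. -/
def frame (o h : σ) (S : List (List σ)) : List σ :=
  separator o h ++ separator o h ++ [h, h, h] ++ weave (separator o h) S

lemma eq_of_append_slots_eq (hoh : o ≠ h) {G S : List (List σ)} {u A B : List σ}
    (hu : ¬ [h, h] <:+: u) (hS : ∀ s ∈ S, ¬ [h, h] <:+: s) (length_le : S.length ≤ G.length)
    (eq : A ++ [h, h] ++ o :: (G.flatMap (· ++ separator o h) ++ B) =
      u ++ [o] ++ [h, h] ++ o :: S.flatMap (· ++ separator o h)) :
    A = u ++ [o] ∧ G = S ∧ B = [] := by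
  induction S generalizing u A G with
  | nil =>
    rcases occurrence_eq_or_later (by simpa using hoh) hu eq with ⟨rfl, hB⟩ | ⟨A', hA'⟩
    · rcases G with _ | ⟨g, G⟩ <;> simp_all [separator]
    · simp at hA'
  | cons s S ih =>
    obtain ⟨hs, hS⟩ := List.forall_mem_cons.1 hS
    have unfold_cons : ∀ (s : List σ) (S : List (List σ)), (s :: S).flatMap (· ++ separator o h) =
        s ++ [o] ++ [h, h] ++ o :: S.flatMap (· ++ separator o h) := by simp [separator]
    rcases occurrence_eq_or_later (by simpa using hoh) hu eq with ⟨rfl, hB⟩ | ⟨A', hA'⟩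
    · rcases G with _ | ⟨g, G⟩
      · simp at length_le
      rw [unfold_cons, unfold_cons] at hB
      obtain ⟨hg, rfl, rfl⟩ := ih (A := g ++ [o]) hs hS (Nat.le_of_succ_le_succ length_le)
        (by simpa using hB)
      exact ⟨rfl, by rw [List.append_cancel_right hg], rfl⟩
    · rw [unfold_cons] at hA'
      obtain ⟨-, rfl, -⟩ := ih hs hS (Nat.le_of_succ_le length_le) hA'
      exact absurd length_le (Nat.not_succ_le_self _)

lemma eq_of_weave_infix (hoh : o ≠ h) {G S : List (List σ)} (hS : ∀ s ∈ S, ¬ [h, h] <:+: s)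
    (length_eq : G.length = S.length)
    (infix_weave : weave (separator o h) G <:+: weave (separator o h) S) : G = S := by
  obtain ⟨A, B, eq⟩ := infix_weave
  refine (eq_of_append_slots_eq hoh (u := []) (A := A ++ [o]) (B := B) ?_ hS length_eq.ge ?_).2.1
  · simp
  · simpa [weave, separator] using eq

lemma hhh_not_infix_weave (hoh : o ≠ h) {S : List (List σ)} (hS : ∀ s ∈ S, ¬ [h, h] <:+: s) :
    ¬ [h, h, h] <:+: weave (separator o h) S := by
  have ho : o ∉ [h, h, h] := by simpa using hoh
  have not_infix_hh : ¬ [h, h, h] <:+: [h, h] := fun hhh => by simpa using hhh.length_le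
  have cross_separator (s : List σ) (hs : ¬ [h, h] <:+: s) {r : List σ} (hr : ¬ [h, h, h] <:+: r) :
      ¬ [h, h, h] <:+: s ++ separator o h ++ r := by
    have split : s ++ separator o h ++ r = s ++ o :: ([h, h] ++ o :: r) := by simp [separator]
    rw [split, infix_append_cons_iff ho, infix_append_cons_iff ho]
    exact not_or.2 ⟨fun hhh => hs ((List.infix_cons List.infix_rfl).trans hhh),
      not_or.2 ⟨not_infix_hh, hr⟩⟩
  refine cross_separator [] (by simp) ?_
  induction S with
  | nil => simp
  | cons s S ih =>
    obtain ⟨hs, hS⟩ := List.forall_mem_cons.1 hS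
    exact cross_separator s hs (ih hS)

lemma eq_of_square_append_eq (hoh : o ≠ h) {p r : List σ} (hp : p ≠ [])
    (eq : p ++ p ++ r = separator o h ++ separator o h) : p = separator o h := by
  have lengths := congrArg List.length eq
  unfold separator at *
  rcases p with _ | ⟨a, _ | ⟨b, _ | ⟨c, _ | ⟨d, _ | ⟨e, p⟩⟩⟩⟩⟩ <;>
    simp at eq lengths <;> grind

lemma exists_eq_separator_of_squares (hoh : o ≠ h) {ι : Type*} {f : ι → List σ} {L : List ι}
    (eq : L.flatMap (fun a => f a ++ f a) = separator o h ++ separator o h) :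
    ∃ a ∈ L, f a = separator o h := by
  induction L with
  | nil => simp [separator] at eq
  | cons a L ih =>
    by_cases ha : f a = []
    · obtain ⟨b, hb, hfb⟩ := ih (by simpa [ha] using eq)
      exact ⟨b, List.mem_cons_of_mem a hb, hfb⟩
    · exact ⟨a, List.mem_cons_self, eq_of_square_append_eq hoh ha eq⟩

lemma eq_of_append_hhh_append_eq_frame (hoh : o ≠ h) {S : List (List σ)}
    (hS : ∀ s ∈ S, ¬ [h, h] <:+: s) {A B : List σ} (eq : A ++ [h, h, h] ++ B = frame o h S) :
    A = separator o h ++ separator o h ∧ B = weave (separator o h) S := by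
  have hu : ¬ [h, h, h] <:+: [o, h, h, o, o, h, h] := by
    simp [List.infix_cons_iff, hoh.symm]
  rcases occurrence_eq_or_later (r := [h, h] ++ o :: S.flatMap (· ++ separator o h))
    (by simpa using hoh) hu eq with ⟨rfl, rfl⟩ | ⟨A', hA'⟩
  · exact ⟨rfl, rfl⟩
  · exact absurd (List.infix_cons ⟨A', B, hA'⟩) (hhh_not_infix_weave hoh hS)

lemma applySub_eq_flatMap {σ : Type} (s : ℕ → List σ) (p : Pattern σ) :
    applySub s p = p.flatMap (Sum.elim (fun a => [a]) s) := by
  induction p with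
  | nil => rfl
  | cons c p ih => rw [applySub, ih, List.flatMap_cons]

@[simp] lemma applySub_append {σ : Type} (s : ℕ → List σ) (p q : Pattern σ) :
    applySub s (p ++ q) = applySub s p ++ applySub s q := by
  simp only [applySub_eq_flatMap, List.flatMap_append]

/-- A pattern whose language contains the frame of a tuple `S` of words avoiding `h h` exactly when
`S` is an instance of one of the templates in `T`, a template being a tuple of words over a set `V`
of variables. The variable `(G, none)` becomes the separator if `G` is the template used, and is
erased otherwise. -/
noncomputable def gadget {σ V : Type} [Encodable V] (h : σ) (T : Finset (List (List V))) :
    Pattern σ :=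
  let var (G : List (List V)) (x : Option V) : σ ⊕ ℕ := .inr (Encodable.encode (G, x))
  T.toList.flatMap (fun G => [var G none, var G none]) ++ [.inl h, .inl h, .inl h] ++
    T.toList.flatMap fun G =>
      [var G none] ++ G.flatMap fun g => g.map (fun x => var G (some x)) ++ [var G none]

variable {σ V : Type} [Encodable V] {o h : σ} {T : Finset (List (List V))} {S : List (List σ)}

lemma applySub_gadget (s : ℕ → List σ) : applySub s (gadget h T) =
    T.toList.flatMap (fun G => s (Encodable.encode (G, (none : Option V))) ++
      s (Encodable.encode (G, (none : Option V)))) ++ [h, h, h] ++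
    T.toList.flatMap fun G => weave (s (Encodable.encode (G, (none : Option V))))
      (G.map (List.flatMap fun x => s (Encodable.encode (G, some x)))) := by
  simp [applySub_eq_flatMap, gadget, weave, List.flatMap_assoc, List.flatMap_map]

lemma flatMap_eq_of_forall_ne {ι : Type*} {L : List ι} (hL : L.Nodup) {a : ι} (ha : a ∈ L)
    {f : ι → List σ} (hf : ∀ b ≠ a, f b = []) : L.flatMap f = f a := by
  obtain ⟨l, r, rfl⟩ := List.append_of_mem ha
  have hl : l.flatMap f = [] := List.flatMap_eq_nil_iff.2 fun b hb => hf b (by grind)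
  have hr : r.flatMap f = [] := List.flatMap_eq_nil_iff.2 fun b hb => hf b (by grind)
  simp [hl, hr]

lemma frame_mem_LangE_gadget {G : List (List V)} (hG : G ∈ T) (τ : V → List σ) :
    frame o h (G.map (List.flatMap τ)) ∈ LangE (gadget h T) := by
  classical
  let value (c : List (List V) × Option V) : List σ :=
    if c.1 = G then c.2.elim (separator o h) τ else []
  let s : ℕ → List σ := Function.extend Encodable.encode value fun _ => []
  have s_encode (c) : s (Encodable.encode c) = value c :=
    Encodable.encode_injective.extend_apply _ _ _
  refine ⟨s, ?_⟩
  have other_empty (G') (hG' : G' ≠ G) (x : Option V) : value (G', x) = [] := if_neg hG'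
  rw [applySub_gadget]
  simp only [s_encode]
  rw [flatMap_eq_of_forall_ne T.nodup_toList (Finset.mem_toList.2 hG),
    flatMap_eq_of_forall_ne T.nodup_toList (Finset.mem_toList.2 hG)]
  · simp [value, frame]
  · intro G' hG'
    simp [weave, other_empty G' hG']
  · intro G' hG'
    simp [other_empty G' hG']

lemma exists_of_frame_mem_LangE_gadget (hoh : o ≠ h) (hT : ∀ G ∈ T, G.length = S.length)
    (hS : ∀ s ∈ S, ¬ [h, h] <:+: s) (mem : frame o h S ∈ LangE (gadget h T)) :
    ∃ G ∈ T, ∃ τ : V → List σ, G.map (List.flatMap τ) = S := by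
  obtain ⟨s, eq⟩ := mem
  rw [applySub_gadget] at eq
  obtain ⟨squares, weaves⟩ := eq_of_append_hhh_append_eq_frame hoh hS eq
  obtain ⟨G, hG, used⟩ := exists_eq_separator_of_squares hoh squares
  refine ⟨G, Finset.mem_toList.1 hG, fun x => s (Encodable.encode (G, some x)),
    eq_of_weave_infix hoh hS (by simpa using hT G (Finset.mem_toList.1 hG)) ?_⟩
  rw [← weaves, ← used]
  exact List.infix_of_mem_flatten (List.mem_map_of_mem hG)

end Gadget

section Definable

variable {σ : Type} {o h : σ}

/-- The pairs of words obtained from a pair of patterns by a common substitution. -/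
def instances (g : Pattern σ × Pattern σ) : Set (List σ × List σ) :=
  Set.range fun τ => (applySub τ g.1, applySub τ g.2)

/-- A relation between words is pattern-definable if it is a finite union of sets of instances of
pairs of patterns. -/
def PatternDefinable (R : Set (List σ × List σ)) : Prop :=
  ∃ T : Set (Pattern σ × Pattern σ), T.Finite ∧ R = ⋃ g ∈ T, instances g

lemma patternDefinable_instances (g : Pattern σ × Pattern σ) : PatternDefinable (instances g) :=
  ⟨{g}, Set.finite_singleton g, by simp⟩

lemma PatternDefinable.biUnion {ι : Type*} {s : Set ι} (hs : s.Finite)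
    {R : ι → Set (List σ × List σ)} (hR : ∀ i ∈ s, PatternDefinable (R i)) :
    PatternDefinable (⋃ i ∈ s, R i) := by
  choose! T hT hRT using hR
  refine ⟨⋃ i ∈ s, T i, hs.biUnion hT, ?_⟩
  rw [Set.iUnion₂_congr hRT]
  simp only [Set.biUnion_iUnion]

lemma PatternDefinable.union {R R' : Set (List σ × List σ)} (hR : PatternDefinable R)
    (hR' : PatternDefinable R') : PatternDefinable (R ∪ R') := by
  obtain ⟨T, hT, rfl⟩ := hR
  obtain ⟨T', hT', rfl⟩ := hR'
  exact ⟨T ∪ T', hT.union hT', by rw [Set.biUnion_union]⟩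

lemma PatternDefinable.swap {R : Set (List σ × List σ)} (hR : PatternDefinable R) :
    PatternDefinable (Prod.swap ⁻¹' R) := by
  obtain ⟨T, hT, rfl⟩ := hR
  refine ⟨Prod.swap '' T, hT.image _, ?_⟩
  rw [Set.biUnion_image, Set.preimage_iUnion₂]
  refine Set.iUnion₂_congr fun g _ => ?_
  ext ⟨W, Y⟩
  simp [instances, and_comm]

lemma patternDefinable_infix_fst (u : List σ) : PatternDefinable {p | u <:+: p.1} := by
  convert! patternDefinable_instances
    (([.inr 0] ++ u.map .inl ++ [.inr 1], [.inr 2]) : Pattern σ × Pattern σ)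
  ext ⟨W, Y⟩
  constructor
  · rintro ⟨A, B, rfl⟩
    refine ⟨fun n => [A, B, Y].getD n [], ?_⟩
    simp [applySub_eq_flatMap, List.flatMap_map]
  · rintro ⟨τ, ⟨⟩⟩
    refine ⟨τ 0, τ 1, ?_⟩
    simp [applySub_eq_flatMap, List.flatMap_map]

lemma patternDefinable_power (n : ℕ) : PatternDefinable
    {p : List σ × List σ | ∃ u, u <:+: p.1 ∧ p.2 = (List.replicate n u).flatten} := by
  convert! patternDefinable_instances
    (([.inr 0, .inr 1, .inr 2], List.replicate n (.inr 1)) : Pattern σ × Pattern σ)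
  ext ⟨W, Y⟩
  constructor
  · rintro ⟨u, ⟨A, B, rfl⟩, hY⟩
    refine ⟨fun n => [A, u, B].getD n [], ?_⟩
    simp_all [applySub_eq_flatMap, List.flatMap_def]
  · rintro ⟨τ, ⟨⟩⟩
    refine ⟨τ 1, ⟨τ 0, τ 2, ?_⟩, ?_⟩ <;> simp [applySub_eq_flatMap, List.flatMap_def]

/-- The frame of a pair of words. The single letters in its further slots force a template to treat
the terminals of a pair of patterns as constants. -/
noncomputable def pairFrame [Fintype σ] (o h : σ) (W Y : List σ) : List σ :=
  frame o h (W :: Y :: Finset.univ.toList.map fun a => [a])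

/-- The template whose instances with constant terminals are the slots of `pairFrame` for the
instances of the pair `g`. -/
noncomputable def template [Fintype σ] (g : Pattern σ × Pattern σ) : List (List (σ ⊕ ℕ)) :=
  g.1 :: g.2 :: Finset.univ.toList.map fun a => [.inl a]

lemma template_map_eq_iff [Fintype σ] {g : Pattern σ × Pattern σ} {W Y : List σ}
    {τ : σ ⊕ ℕ → List σ} :
    (template g).map (List.flatMap τ) = W :: Y :: Finset.univ.toList.map (fun a => [a]) ↔
      (∀ a, τ (.inl a) = [a]) ∧ g.1.flatMap τ = W ∧ g.2.flatMap τ = Y := by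
  simp only [template, List.map_cons, List.map_map, List.cons.injEq, List.map_inj_left,
    Finset.mem_toList, Finset.mem_univ, Function.comp_apply, List.flatMap_singleton, true_imp_iff]
  tauto

theorem PatternDefinable.exists_pattern [Fintype σ] [Encodable σ] (hoh : o ≠ h)
    {R : Set (List σ × List σ)} (hR : PatternDefinable R)
    (mem_of_hh : ∀ W Y, [h, h] <:+: W ∨ [h, h] <:+: Y → (W, Y) ∈ R) :
    ∃ β : Pattern σ, ∀ W Y, pairFrame o h W Y ∈ LangE β ↔ (W, Y) ∈ R := by
  classical
  obtain ⟨T, hT, rfl⟩ := hR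
  refine ⟨gadget h (hT.toFinset.image template), fun W Y => ⟨fun mem => ?_, fun mem => ?_⟩⟩
  · by_cases hh : [h, h] <:+: W ∨ [h, h] <:+: Y
    · exact mem_of_hh W Y hh
    obtain ⟨hW, hY⟩ := not_or.1 hh
    have slots_avoid : ∀ s ∈ W :: Y :: Finset.univ.toList.map (fun a => [a]), ¬ [h, h] <:+: s := by
      simp only [List.forall_mem_cons, List.forall_mem_map]
      exact ⟨hW, hY, fun a _ hh => by simpa using hh.length_le⟩
    obtain ⟨G, hG, τ, eq⟩ := exists_of_frame_mem_LangE_gadget hoh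
      (Finset.forall_mem_image.2 fun g _ => by simp [template]) slots_avoid mem
    obtain ⟨g, hg, rfl⟩ := Finset.mem_image.1 hG
    obtain ⟨letters, rfl, rfl⟩ := template_map_eq_iff.1 eq
    have hτ : Sum.elim (fun a => [a]) (fun n => τ (.inr n)) = τ := by
      ext (a | n) : 1
      exacts [(letters a).symm, rfl]
    refine Set.mem_biUnion (hT.mem_toFinset.1 hg) ⟨fun n => τ (.inr n), ?_⟩
    simp only [applySub_eq_flatMap, hτ]
  · obtain ⟨g, hg, τ, eq⟩ := Set.mem_iUnion₂.1 mem
    obtain ⟨rfl, rfl⟩ := Prod.mk.inj eq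
    have hmem := frame_mem_LangE_gadget (o := o) (h := h)
      (Finset.mem_image_of_mem template (hT.mem_toFinset.2 hg)) (Sum.elim (fun a => [a]) τ)
    rwa [template_map_eq_iff.2 ⟨fun _ => rfl, rfl, rfl⟩, ← applySub_eq_flatMap,
      ← applySub_eq_flatMap] at hmem

end Definable

section Windows

variable {σ : Type} {o h : σ} {m n : ℕ}

open Matrix

lemma flatMap_replicate_eq {ι : Type*} (L : List ι) (f : ι → ℕ) (a : σ) :
    (L.flatMap fun i => List.replicate (f i) a) = List.replicate (L.map f).sum a := by
  induction L with
  | nil => rfl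
  | cons i L ih => simp [ih]

lemma finRange_flatMap_replicate (f : Fin m → ℕ) (a : σ) :
    ((List.finRange m).flatMap fun i => List.replicate (f i) a) = List.replicate (∑ i, f i) a := by
  rw [flatMap_replicate_eq, Fin.sum_univ_def]

/-- The pair of patterns matching `(W, o ^ K)` when `W` contains the unary code of a vector
`v + A *ᵥ c` with parameters `c` of sum at most `K`. -/
def windowPatterns (o h : σ) (v : Fin n → ℕ) (A : Matrix (Fin n) (Fin m) ℕ) :
    Pattern σ × Pattern σ :=
  ([.inr m, .inl h] ++ (List.finRange n).flatMap (fun i => List.replicate (v i + 1) (.inl o) ++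
    (List.finRange m).flatMap (fun j => List.replicate (A i j) (.inr j)) ++ [.inl h]) ++
      [.inr (m + 1)],
    (List.finRange m).map (fun j => .inr j) ++ [.inr (m + 2)])

lemma applySub_flatMap {ι : Type*} (τ : ℕ → List σ) (L : List ι) (p : ι → Pattern σ) :
    applySub τ (L.flatMap p) = L.flatMap fun i => applySub τ (p i) := by
  simp only [applySub_eq_flatMap, List.flatMap_assoc]

lemma applySub_windowPatterns_fst {v : Fin n → ℕ} {A : Matrix (Fin n) (Fin m) ℕ}
    {τ : ℕ → List σ} {c : Fin m → ℕ} (hτ : ∀ j : Fin m, τ j = List.replicate (c j) o) :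
    applySub τ (windowPatterns o h v A).1 =
      τ m ++ h :: unary o h (List.ofFn (v + A *ᵥ c)) ++ τ (m + 1) := by
  have parameters (i : Fin n) : applySub τ ((List.finRange m).flatMap fun j =>
      List.replicate (A i j) (.inr j)) = List.replicate ((A *ᵥ c) i) o := by
    simp [applySub_eq_flatMap, List.flatMap_assoc, List.flatMap_replicate, hτ,
      finRange_flatMap_replicate, mulVec, dotProduct]
  have block (i : Fin n) : applySub τ (List.replicate (v i + 1) (.inl o) ++
      (List.finRange m).flatMap (fun j => List.replicate (A i j) (.inr j)) ++ [.inl h]) =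
        List.replicate ((v + A *ᵥ c) i + 1) o ++ [h] := by
    rw [applySub_append, applySub_append, parameters, Pi.add_apply, add_right_comm,
      List.replicate_add (v i + 1)]
    simp [applySub_eq_flatMap, List.flatMap_replicate]
  have code : unary o h (List.ofFn (v + A *ᵥ c)) =
      (List.finRange n).flatMap fun i => List.replicate ((v + A *ᵥ c) i + 1) o ++ [h] := by
    rw [unary, List.ofFn_eq_map, List.flatMap_map]
  rw [windowPatterns, applySub_append, applySub_append, applySub_flatMap, code]
  simp only [block]
  simp [applySub]

lemma mem_instances_windowPatterns_iff {v : Fin n → ℕ} {A : Matrix (Fin n) (Fin m) ℕ}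
    {W : List σ} {K : ℕ} : (W, List.replicate K o) ∈ instances (windowPatterns o h v A) ↔
      ∃ c : Fin m → ℕ, ∑ j, c j ≤ K ∧ h :: unary o h (List.ofFn (v + A *ᵥ c)) <:+: W := by
  have snd_eq (τ : ℕ → List σ) : applySub τ (windowPatterns o h v A).2 =
      (List.finRange m).flatMap (fun j : Fin m => τ j) ++ τ (m + 2) := by
    simp [windowPatterns, applySub_eq_flatMap, List.flatMap_map]
  constructor
  · rintro ⟨τ, eq⟩
    obtain ⟨rfl, hY⟩ := Prod.mk.inj eq
    rw [snd_eq] at hY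
    obtain ⟨hK, hall⟩ := List.eq_replicate_iff.1 hY
    have hτ (j : Fin m) : τ j = List.replicate (τ j).length o :=
      List.eq_replicate_of_mem fun a ha => hall a (List.mem_append_left _
        (List.mem_flatMap.2 ⟨j, List.mem_finRange j, ha⟩))
    refine ⟨fun j => (τ j).length, ?_, τ m, τ (m + 1), (applySub_windowPatterns_fst hτ).symm⟩
    rw [← hK, Fin.sum_univ_def]
    simp [List.length_flatMap]
  · rintro ⟨c, hc, A', B', rfl⟩
    let τ (k : ℕ) : List σ := if hk : k < m then List.replicate (c ⟨k, hk⟩) o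
      else [A', B', List.replicate (K - ∑ j, c j) o].getD (k - m) []
    have hτ (j : Fin m) : τ j = List.replicate (c j) o := by simp [τ]
    refine ⟨τ, Prod.ext ?_ ?_⟩
    · simp only [applySub_windowPatterns_fst hτ]
      simp [τ]
    · simp only [snd_eq, hτ, finRange_flatMap_replicate]
      simp [τ, hc]

lemma exists_mulVec_eq_sum_le (A : Matrix (Fin n) (Fin m) ℕ) (c : Fin m → ℕ) :
    ∃ c', A *ᵥ c' = A *ᵥ c ∧ ∑ j, c' j ≤ ∑ i, (A *ᵥ c) i := by
  classical
  -- A parameter that multiplies a nonzero column is bounded by the sum; the others may be erased.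
  refine ⟨fun j => if ∃ i, A i j ≠ 0 then c j else 0, ?_, ?_⟩
  · ext i
    simp only [mulVec, dotProduct]
    refine Finset.sum_congr rfl fun j _ => ?_
    split_ifs with hj
    · rfl
    · simp [not_exists_not.1 hj i]
  · simp only [mulVec, dotProduct]
    rw [Finset.sum_comm]
    refine Finset.sum_le_sum fun j _ => ?_
    split_ifs with hj
    · obtain ⟨i, hi⟩ := hj
      exact (Nat.le_mul_of_pos_left _ (Nat.pos_of_ne_zero hi)).trans
        (Finset.single_le_sum (f := fun i => A i j * c j) (fun _ _ => Nat.zero_le _)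
          (Finset.mem_univ i))
    · exact Nat.zero_le _

theorem exists_patternDefinable_windows {F : Set (Fin n → ℕ)} (hF : IsSemilinearSet F) :
    ∃ R : Set (List σ × List σ), PatternDefinable R ∧ ∀ W K,
      ((W, List.replicate K o) ∈ R → ∃ w ∈ F, h :: unary o h (List.ofFn w) <:+: W) ∧
      ∀ w ∈ F, ∑ i, w i ≤ K → h :: unary o h (List.ofFn w) <:+: W →
        (W, List.replicate K o) ∈ R := by
  obtain ⟨S, hS, linear, rfl⟩ := hF
  simp only [Nat.isLinearSet_iff_exists_matrix] at linear
  choose! v m A eq using linear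
  refine ⟨⋃ t ∈ S, instances (windowPatterns o h (v t) (A t)),
    .biUnion hS fun _ _ => patternDefinable_instances _, fun W K => ⟨fun mem => ?_, ?_⟩⟩
  · obtain ⟨t, ht, mem⟩ := Set.mem_iUnion₂.1 mem
    obtain ⟨c, -, hc⟩ := mem_instances_windowPatterns_iff.1 mem
    exact ⟨_, Set.mem_sUnion_of_mem ((eq t ht).ge ⟨c, rfl⟩) ht, hc⟩
  · rintro w ⟨t, ht, hw⟩ sum_le hW
    obtain ⟨c, rfl⟩ := (eq t ht).le hw
    obtain ⟨c', hc', sum_le'⟩ := exists_mulVec_eq_sum_le (A t) c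
    refine Set.mem_biUnion ht (mem_instances_windowPatterns_iff.2 ⟨c', ?_, by rwa [hc']⟩)
    refine (sum_le'.trans ?_).trans sum_le
    exact Finset.sum_le_sum fun i _ => Nat.le_add_left _ _

end Windows

section Reduction

variable {σ : Type} {o h : σ} {n : ℕ} {F : Set (Fin n → ℕ)}

/-- A word over `{o, h}` without the factor `h h` that contains no code of a vector in `F`. -/
def Avoids (o h : σ) (F : Set (Fin n → ℕ)) (W : List σ) : Prop :=
  (∀ a ∈ W, a = o ∨ a = h) ∧ ¬ [h, h] <:+: W ∧
    ∀ w ∈ F, ¬ h :: unary o h (List.ofFn w) <:+: W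

/-- The defects that rule out a pair `(W, Y)` independently of `F`: a letter outside `{o, h}` in
`W`, a letter other than `o` in `Y`, a factor `h h` of `W`, or `Y = u ^ N` for a factor `u` of `W`.
The last one makes `N` copies of `o ^ k` longer than the sum of the entries of any vector of length
`N` coded in `W`. -/
def defects (o h : σ) (N : ℕ) : Set (List σ × List σ) :=
  (⋃ a ∈ ({o, h}ᶜ : Set σ), {p | [a] <:+: p.1}) ∪ (⋃ a ∈ ({o}ᶜ : Set σ), {p | [a] <:+: p.2}) ∪
    {p | [h, h] <:+: p.1} ∪ {p | ∃ u, u <:+: p.1 ∧ p.2 = (List.replicate N u).flatten}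

lemma patternDefinable_defects [Finite σ] (o h : σ) (N : ℕ) :
    PatternDefinable (defects o h N) :=
  (((PatternDefinable.biUnion (Set.toFinite _) fun a _ => patternDefinable_infix_fst [a]).union
    (.biUnion (Set.toFinite _) fun a _ => (patternDefinable_infix_fst [a]).swap)).union
      (patternDefinable_infix_fst [h, h])).union (patternDefinable_power N)

lemma mem_defects_iff {N : ℕ} {W Y : List σ} : (W, Y) ∉ defects o h N ↔
    (∀ a ∈ W, a = o ∨ a = h) ∧ (∀ a ∈ Y, a = o) ∧ ¬ [h, h] <:+: W ∧
      ∀ u, u <:+: W → Y ≠ (List.replicate N u).flatten := by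
  simp only [defects, Set.mem_union, Set.mem_iUnion, Set.mem_ofPred_eq, List.singleton_infix_iff]
  grind

lemma replicate_infix_unary {X : List ℕ} {k l : ℕ} (hl : l ∈ X) (hkl : k ≤ l) :
    List.replicate k o <:+: unary o h X := by
  obtain ⟨X₁, X₂, rfl⟩ := List.append_of_mem hl
  refine ⟨unary o h X₁, List.replicate (l + 1 - k) o ++ h :: unary o h X₂, ?_⟩
  have split : List.replicate (l + 1) o = List.replicate k o ++ List.replicate (l + 1 - k) o := by
    rw [List.replicate_append_replicate, Nat.add_sub_of_le (hkl.trans l.le_succ)]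
  simp only [unary_append, unary_cons, split, List.append_assoc]

lemma mem_defects_of_hh (hoh : o ≠ h) {N : ℕ} {W Y : List σ}
    (hh : [h, h] <:+: W ∨ [h, h] <:+: Y) : (W, Y) ∈ defects o h N := by
  by_contra defect_free
  obtain ⟨-, lettersY, hhW, -⟩ := mem_defects_iff.1 defect_free
  rcases hh with hh | hh
  · exact hhW hh
  · exact hoh (lettersY h (hh.subset (by simp))).symm

lemma sum_le_of_notMem_defects {W : List σ} {N k : ℕ}
    (defect_free : (W, (List.replicate N (List.replicate k o)).flatten) ∉ defects o h N)
    {w : Fin n → ℕ} (infix_w : h :: unary o h (List.ofFn w) <:+: W) : ∑ i, w i ≤ n * k := by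
  have entry_le (i : Fin n) : w i ≤ k := by
    by_contra! hi
    have block : List.replicate k o <:+: unary o h (List.ofFn w) :=
      replicate_infix_unary (List.mem_ofFn.2 ⟨i, rfl⟩) hi.le
    exact (mem_defects_iff.1 defect_free).2.2.2 _ ((List.infix_cons block).trans infix_w) rfl
  simpa using Finset.sum_le_card_nsmul Finset.univ w k fun i _ => entry_le i

lemma replicate_notMem_defects {W : List σ} {N : ℕ} (hN : 0 < N)
    (letters : ∀ a ∈ W, a = o ∨ a = h) (hh : ¬ [h, h] <:+: W) :
    (W, (List.replicate N (List.replicate (W.length + 1) o)).flatten) ∉ defects o h N := by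
  refine mem_defects_iff.2 ⟨letters, by simp, hh, fun u hu eq => ?_⟩
  have lengths := congrArg List.length eq
  simp only [List.length_flatten, List.map_replicate, List.length_replicate,
    List.sum_replicate, smul_eq_mul] at lengths
  have := Nat.eq_of_mul_eq_mul_left hN lengths
  have := hu.length_le
  omega

theorem exists_patternDefinable_avoids [Finite σ] (hoh : o ≠ h) (hF : IsSemilinearSet F) :
    ∃ R : Set (List σ × List σ), PatternDefinable R ∧
      (∀ W Y, [h, h] <:+: W ∨ [h, h] <:+: Y → (W, Y) ∈ R) ∧
      ∀ W, (∀ y, (W, (List.replicate (n + 1) y).flatten) ∈ R) ↔ ¬ Avoids o h F W := by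
  obtain ⟨R, hR, windows⟩ := exists_patternDefinable_windows (o := o) (h := h) hF
  refine ⟨defects o h (n + 1) ∪ R, (patternDefinable_defects o h _).union hR,
    fun W Y hh => .inl (mem_defects_of_hh hoh hh), fun W => ?_⟩
  rw [← not_iff_not, not_not, not_forall]
  constructor
  · rintro ⟨y, hy⟩
    obtain ⟨defect_free, window_free⟩ := not_or.1 hy
    obtain ⟨lettersW, lettersY, hh, -⟩ := mem_defects_iff.1 defect_free
    obtain ⟨k, rfl⟩ : ∃ k, y = List.replicate k o :=
      ⟨_, List.eq_replicate_of_mem fun a ha => lettersY a (by simp [ha])⟩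
    refine ⟨lettersW, hh, fun w hw infix_w => window_free ?_⟩
    have sum_le := sum_le_of_notMem_defects defect_free infix_w
    rw [List.flatten_replicate_replicate]
    exact (windows W _).2 w hw (sum_le.trans (Nat.mul_le_mul_right k n.le_succ)) infix_w
  · rintro ⟨letters, hh, avoids⟩
    refine ⟨List.replicate (W.length + 1) o,
      not_or.2 ⟨replicate_notMem_defects n.succ_pos letters hh, fun mem => ?_⟩⟩
    rw [List.flatten_replicate_replicate] at mem
    obtain ⟨w, hw, infix_w⟩ := (windows W _).1 mem
    exact avoids w hw infix_w

theorem forall_not_avoids_iff (hoh : o ≠ h) (P Q : List ℕ) :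
    (∀ x, ¬ Avoids o h F (h :: unary o h P ++ x ++ h :: unary o h Q)) ↔
      ∀ X ≠ [], ∃ w ∈ F, List.ofFn w <:+: P ++ X ++ Q := by
  have word_eq {X x} (hx : unary o h X = x ++ [h]) :
      h :: unary o h P ++ x ++ h :: unary o h Q = h :: unary o h (P ++ X ++ Q) := by
    simp [hx]
  constructor
  · intro hcode X hX
    obtain ⟨x, hx⟩ : ∃ x, unary o h X = x ++ [h] := by
      obtain ⟨X, k, rfl⟩ := (List.eq_nil_or_concat X).resolve_left hX
      exact ⟨unary o h X ++ List.replicate (k + 1) o, by simp⟩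
    by_contra! hF
    refine hcode x ?_
    rw [word_eq hx]
    refine ⟨fun a ha => ?_, hh_not_infix_cons_unary hoh _, fun w hw => ?_⟩
    · exact (List.mem_cons.1 ha).elim .inr mem_unary
    · rw [cons_unary_infix_iff hoh]
      exact hF w hw
  · rintro hX x ⟨letters, hh, avoids⟩
    have infix_word : h :: (x ++ [h]) <:+: h :: unary o h P ++ x ++ h :: unary o h Q := by
      obtain ⟨V, hV⟩ := exists_cons_unary_eq_concat (o := o) (h := h) P
      exact ⟨V, unary o h Q, by simp [hV]⟩
    obtain ⟨X, hX_ne, hx⟩ := exists_unary_eq_concat hoh (fun a ha => letters a (by simp [ha]))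
      fun hh' => hh (hh'.trans infix_word)
    obtain ⟨w, hw, infix_w⟩ := hX X hX_ne
    rw [word_eq hx] at avoids
    exact avoids w hw ((cons_unary_infix_iff hoh _ _).2 infix_w)

end Reduction

section InclusionPattern

variable {σ : Type} {o h : σ} {n : ℕ}

lemma flatMap_unary {σ' : Type*} {o' h' : σ'} {τ : σ' → List σ} (ho : τ o' = [o])
    (hh : τ h' = [h]) (X : List ℕ) : (unary o' h' X).flatMap τ = unary o h X := by
  simp [unary, List.flatMap_assoc, List.flatMap_append, List.flatMap_replicate, ho, hh]

lemma flatMap_frame {σ' : Type*} {o' h' : σ'} {τ : σ' → List σ} (ho : τ o' = [o])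
    (hh : τ h' = [h]) (S : List (List σ')) :
    (frame o' h' S).flatMap τ = frame o h (S.map (List.flatMap τ)) := by
  simp [frame, weave, separator, List.flatMap_assoc, List.flatMap_map, ho, hh]

/-- The pattern whose instances are the frames of the pairs `(h P x h Q, y ^ (n + 1))`, where `P`
and `Q` stand for their unary codes and `x` and `y` are arbitrary words. -/
noncomputable def historyPattern [Fintype σ] (o h : σ) (n : ℕ) (P Q : List ℕ) : Pattern σ :=
  frame (.inl o) (.inl h) ((.inl h :: unary (.inl o) (.inl h) P ++ [.inr 0] ++
    .inl h :: unary (.inl o) (.inl h) Q) :: List.replicate (n + 1) (.inr 1) ::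
      Finset.univ.toList.map fun a => [.inl a])

lemma applySub_historyPattern [Fintype σ] (P Q : List ℕ) (s : ℕ → List σ) :
    applySub s (historyPattern o h n P Q) =
      pairFrame o h (h :: unary o h P ++ s 0 ++ h :: unary o h Q)
        (List.replicate (n + 1) (s 1)).flatten := by
  have letter_o : Sum.elim (fun a => [a]) s (.inl o) = [o] := rfl
  have letter_h : Sum.elim (fun a => [a]) s (.inl h) = [h] := rfl
  rw [applySub_eq_flatMap, historyPattern, flatMap_frame letter_o letter_h]
  simp [pairFrame, flatMap_unary letter_o letter_h, List.flatMap_replicate, Function.comp_def]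

lemma primrec_frame_cons [Primcodable σ] (o h : σ) (S : List (List σ)) :
    Primrec fun W => frame o h (W :: S) := by
  have unfolded (W : List σ) : frame o h (W :: S) =
      (separator o h ++ separator o h ++ [h, h, h] ++ separator o h) ++
        (W ++ (separator o h ++ S.flatMap (· ++ separator o h))) := by
    simp [frame, weave]
  simp only [unfolded]
  exact Primrec.list_append.comp (.const _) (Primrec.list_append.comp .id (.const _))

lemma primrec_unary [Primcodable σ] (o h : σ) : Primrec (unary o h) := by
  have primrec_replicate : Primrec fun k => List.replicate k o :=
    (Primrec.list_map .list_range (.const o)).of_eq fun k => by simp [List.map_const']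
  have primrec_block : Primrec fun k => List.replicate (k + 1) o ++ [h] :=
    Primrec.list_append.comp (primrec_replicate.comp .succ) (.const [h])
  exact Primrec.list_flatMap .id (primrec_block.comp .snd).to₂

lemma primrec_historyPattern [Fintype σ] [Primcodable σ] (o h : σ) (n : ℕ) (Q : List ℕ) :
    Primrec fun P => historyPattern o h n P Q := by
  refine (primrec_frame_cons _ _ _).comp ?_
  exact Primrec.list_append.comp (Primrec.list_append.comp
    (Primrec.list_cons.comp (.const _) (primrec_unary _ _)) (.const _)) (.const _)

theorem exists_forall_LangE_historyPattern_subset_iff [Fintype σ] [Encodable σ] (hoh : o ≠ h)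
    {F : Set (Fin n → ℕ)} (hF : IsSemilinearSet F) :
    ∃ β : Pattern σ, ∀ P Q, LangE (historyPattern o h n P Q) ⊆ LangE β ↔
      ∀ X ≠ [], ∃ w ∈ F, List.ofFn w <:+: P ++ X ++ Q := by
  obtain ⟨R, hR, mem_of_hh, avoids⟩ := exists_patternDefinable_avoids hoh hF
  obtain ⟨β, hβ⟩ := hR.exists_pattern hoh mem_of_hh
  refine ⟨β, fun P Q => ?_⟩
  rw [← forall_not_avoids_iff hoh P Q]
  simp only [← avoids, ← hβ]
  constructor
  · intro incl x y
    refine incl ⟨fun i => [x, y].getD i [], ?_⟩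
    rw [applySub_historyPattern]
    rfl
  · rintro mem _ ⟨s, rfl⟩
    rw [applySub_historyPattern]
    exact mem _ _

end InclusionPattern

end PatternInclusion

open PatternInclusion

/-- The inclusion problem for erasing pattern languages is undecidable for every
finite alphabet of size at least 2. -/
theorem inclusion_EPattern_undecidable
    (σ : Type) [Fintype σ] [Primcodable σ] (hcard : 2 ≤ Fintype.card σ) :
    ¬ ComputablePred fun inp : Pattern σ × Pattern σ => LangE inp.1 ⊆ LangE inp.2 := by
  intro decidable
  obtain ⟨o, h, hoh⟩ := Fintype.one_lt_card_iff.1 hcard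
  obtain ⟨st, A, B, graph, hB, undecidable⟩ := exists_semilinear_step_undecidable
  obtain ⟨β, hβ⟩ := exists_forall_LangE_historyPattern_subset_iff hoh
    (isSemilinearSet_consistent graph).compl
  let α (n : ℕ) : Pattern σ := historyPattern o h 4 [2 * A + 1, 2 * B n] [1, 1]
  have reduction (n : ℕ) : LangE (α n) ⊆ LangE β ↔ ¬ (StateTransition.eval st (A, B n)).Dom := by
    rw [hβ, eval_dom_iff_exists_history]
    push Not
    simp only [and_comm, Set.mem_compl_iff, Set.mem_ofPred_eq]
  have primrec_α : Primrec fun n => (α n, β) :=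
    ((primrec_historyPattern o h 4 [1, 1]).comp (Primrec.list_cons.comp (.const _)
      (Primrec.list_cons.comp (Primrec.nat_mul.comp (.const 2) hB) (.const [])))).pair (.const β)
  have not_dom : ComputablePred fun n => ¬ (StateTransition.eval st (A, B n)).Dom :=
    .computable_of_manyOneReducible ⟨_, primrec_α.to_comp, fun n => (reduction n).symm⟩ decidable
  exact undecidable (not_dom.not.of_eq fun n => not_not)
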